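/- LP-rounding gives a factor-2 guarantee for one-sided guarding: let f : ℝ → ℝ be a terrain, G_L, G_R ⊆ ℝ finite sets of left and right guards with nonnegative weights w_L : G_L → ℝ and w_R : G_R → ℝ, and N ⊆ ℝ a finite set of points. Suppose x : G_L → ℝ and y : G_R → ℝ are nonnegative and for every p ∈ N, Σ_{g ∈ G_L, g < p, g sees p} x(g) + Σ_{g ∈ G_R, p < g, g sees p} y(g) ≥ 1. Then there exist A_L ⊆ G_L and A_R ⊆ G_R such that every p ∈ N is seen from the left by some guard in A_L or from the right by some guard in A_R, and Σ_{g ∈ A_L} w_L(g) + Σ_{g ∈ A_R} w_R(g) ≤ 2·(Σ_{g ∈ G_L} w_L(g)·x(g) + Σ_{g ∈ G_R} w_R(g)·y(g)). -/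

import Mathlib

/-!
Every point receives LP value at least `1/2` from the left guards or at least `1/2` from the right
guards. Doubling the LP solution therefore gives two purely one-sided fractional covers, and it
suffices that one-sided covering has integrality gap `1` (`exists_cover_of_nested`).

The geometric input is the order claim `Sees.order_claim`: if `a < b < c < d`, `a` sees `c` and
`b` sees `d`, then `a` sees `d`. Consequently, among the left guards seeing a point `p`, a guard
further to the left sees every point to the right of `p` that a guard nearer to `p` sees; so the
guards seeing the leftmost point see nested sets of points. The mirror statement holds on the right.

The integrality gap is shown by a local-ratio induction that removes the leftmost point `p`. Let `ε`
be the least weight of a guard seeing `p`, lower the weight of every guard seeing `p` by `ε`, and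
cover the other points by induction. Adding a guard of reduced weight `0` that sees `p` costs
nothing. Of the chosen guards that see `p` only the one with the largest view is kept, so the true
weight of the cover exceeds its reduced weight by exactly `ε`, while the LP value exceeds its
reduced value by at least `ε`.
-/

open scoped Classical

/-- `a` sees `b` on the terrain `f`. -/
def Sees (f : ℝ → ℝ) (a b : ℝ) : Prop :=
  ∀ t ∈ Set.Icc (0:ℝ) 1, f ((1 - t) * a + t * b) ≤ (1 - t) * f a + t * f b

/-- A guard `g` sees a point `p` from the left. -/
def SeesLeft (f : ℝ → ℝ) (g p : ℝ) : Prop := g < p ∧ Sees f g p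

/-- A guard `g` sees a point `p` from the right. -/
def SeesRight (f : ℝ → ℝ) (g p : ℝ) : Prop := p < g ∧ Sees f g p

theorem Sees.symm {f : ℝ → ℝ} {a b : ℝ} (h : Sees f a b) : Sees f b a := by
  intro t ht
  have := h (1 - t) ⟨by linarith [ht.2], by linarith [ht.1]⟩
  simp only [sub_sub_cancel] at this
  rw [add_comm ((1 - t) * b), add_comm ((1 - t) * f b)]
  exact this

/-- Division-free form of visibility, parametrized by the abscissa `z` of a point of the segment. -/
theorem sees_iff_of_lt {f : ℝ → ℝ} {a b : ℝ} (hab : a < b) :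
    Sees f a b ↔ ∀ z, a ≤ z → z ≤ b → f z * (b - a) ≤ (b - z) * f a + (z - a) * f b := by
  have hpos : 0 < b - a := sub_pos.2 hab
  constructor
  · intro h z hz1 hz2
    have := h ((z - a) / (b - a))
      ⟨div_nonneg (by linarith) hpos.le, (div_le_one hpos).2 (by linarith)⟩
    have e : (1 - (z - a) / (b - a)) * a + (z - a) / (b - a) * b = z := by
      field_simp
      ring
    rw [e] at this
    have h2 := mul_le_mul_of_nonneg_right this hpos.le
    refine h2.trans_eq ?_
    field_simp
    ring
  · intro h t ht
    have := h ((1 - t) * a + t * b) (by nlinarith [ht.1, ht.2]) (by nlinarith [ht.1, ht.2])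
    refine le_of_mul_le_mul_right (this.trans_eq ?_) hpos
    ring

/-- The order claim for terrains. -/
theorem Sees.order_claim {f : ℝ → ℝ} {a b c d : ℝ} (hab : a < b) (hbc : b < c) (hcd : c < d)
    (hac : Sees f a c) (hbd : Sees f b d) : Sees f a d := by
  rw [sees_iff_of_lt (hab.trans hbc)] at hac
  rw [sees_iff_of_lt (hbc.trans hcd)] at hbd
  rw [sees_iff_of_lt (hab.trans (hbc.trans hcd))]
  -- `D z` is `d - a` times the height of the terrain above the chord from `a` to `d`.
  obtain ⟨D, hD⟩ : ∃ D : ℝ → ℝ, ∀ z, D z = f z * (d - a) - ((d - z) * f a + (z - a) * f d) :=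
    ⟨_, fun _ => rfl⟩
  have hda : 0 < d - a := by linarith
  have h1 : ∀ z, a ≤ z → z ≤ c → D z * (c - a) ≤ (z - a) * D c := by
    intro z hz hz'
    have := mul_le_mul_of_nonneg_right (hac z hz hz') hda.le
    rw [hD, hD]
    linarith
  have h2 : ∀ z, b ≤ z → z ≤ d → D z * (d - b) ≤ (d - z) * D b := by
    intro z hz hz'
    have := mul_le_mul_of_nonneg_right (hbd z hz hz') hda.le
    rw [hD, hD]
    linarith
  have hb := h1 b hab.le hbc.le
  have hc := h2 c hbc.le hcd.le
  -- A positive value of `D` at `b` or `c` forces both `D b < D c` and `D c < D b`.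
  have hDc : D c ≤ 0 := by
    by_contra! hpos
    have hDb : 0 < D b := by
      by_contra! hn
      nlinarith
    have : D b < D c := by nlinarith
    have : D c < D b := by nlinarith
    linarith
  have hDb : D b ≤ 0 := by
    by_contra! hpos
    nlinarith
  intro z hz hz'
  have hz0 : D z ≤ 0 := by
    by_contra! hpos
    rcases le_total z c with hzc | hzc
    · nlinarith [h1 z hz hzc]
    · nlinarith [h2 z (by linarith) hz']
  rw [hD] at hz0
  linarith

/-- Weighted covering has integrality gap `1` when, for every point `p`, any two guards seeing `p`
have comparable views of the points from `p` on. -/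
theorem exists_cover_of_nested {α β : Type*} [LinearOrder α] (R : β → α → Prop)
    (hR : ∀ p g g', R g p → R g' p →
      (∀ q, p ≤ q → R g q → R g' q) ∨ (∀ q, p ≤ q → R g' q → R g q))
    (G : Finset β) (x : β → ℝ) (hx : ∀ g ∈ G, 0 ≤ x g) (N : Finset α) :
    ∀ w : β → ℝ, (∀ g ∈ G, 0 ≤ w g) →
      (∀ p ∈ N, 1 ≤ ∑ g ∈ G, if R g p then x g else 0) →
      ∃ A ⊆ G, (∀ p ∈ N, ∃ g ∈ A, R g p) ∧ ∑ g ∈ A, w g ≤ ∑ g ∈ G, w g * x g := by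
  induction N using Finset.induction_on_min with
  | empty =>
    intro w hw _
    refine ⟨∅, by simp, by simp, ?_⟩
    simpa using Finset.sum_nonneg fun g hg => mul_nonneg (hw g hg) (hx g hg)
  | insert p N hmin ih =>
    intro w hw hcov
    have hp := hcov p (Finset.mem_insert_self _ _)
    have hne : (G.filter fun g => R g p).Nonempty := by
      by_contra hemp
      rw [Finset.not_nonempty_iff_eq_empty] at hemp
      rw [← Finset.sum_filter, hemp, Finset.sum_empty] at hp
      linarith
    obtain ⟨g₀, hg₀, hg₀min⟩ := Finset.exists_min_image _ w hne
    rw [Finset.mem_filter] at hg₀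
    obtain ⟨hg₀G, hg₀p⟩ := hg₀
    obtain ⟨w', hw'⟩ : ∃ w' : β → ℝ, ∀ g, w' g = w g - if R g p then w g₀ else 0 :=
      ⟨_, fun _ => rfl⟩
    have hw'0 : ∀ g ∈ G, 0 ≤ w' g := by
      intro g hg
      rw [hw']
      split_ifs with h
      · linarith [hg₀min g (Finset.mem_filter.2 ⟨hg, h⟩)]
      · linarith [hw g hg]
    obtain ⟨A, hAG, hAcov, hAw⟩ := ih w' hw'0 fun q hq => hcov q (Finset.mem_insert_of_mem hq)
    have hBG : insert g₀ A ⊆ G := Finset.insert_subset hg₀G hAG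
    have hBw : ∑ g ∈ insert g₀ A, w' g ≤ ∑ g ∈ A, w' g := by
      by_cases h : g₀ ∈ A
      · rw [Finset.insert_eq_of_mem h]
      · rw [Finset.sum_insert h, hw' g₀, if_pos hg₀p]
        linarith
    -- The number of points seen picks out the largest of the nested views.
    obtain ⟨m, hm, hmmax⟩ := Finset.exists_max_image ((insert g₀ A).filter fun g => R g p)
      (fun g => ((insert p N).filter fun q => R g q).card)
      ⟨g₀, Finset.mem_filter.2 ⟨Finset.mem_insert_self _ _, hg₀p⟩⟩
    rw [Finset.mem_filter] at hm
    obtain ⟨hmB, hmp⟩ := hm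
    have hle : ∀ q ∈ insert p N, p ≤ q := by
      intro q hq
      rcases Finset.mem_insert.1 hq with rfl | hq
      · exact le_rfl
      · exact (hmin q hq).le
    have hmdom : ∀ g ∈ insert g₀ A, R g p → ∀ q ∈ insert p N, R g q → R m q := by
      intro g hg hgp q hq hgq
      rcases hR p g m hgp hmp with h | h
      · exact h q (hle q hq) hgq
      · have hsub : ((insert p N).filter fun q => R m q) ⊆ (insert p N).filter fun q => R g q := by
          intro r hr
          rw [Finset.mem_filter] at hr ⊢
          exact ⟨hr.1, h r (hle r hr.1) hr.2⟩
        have heq := Finset.eq_of_subset_of_card_le hsub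
          (hmmax g (Finset.mem_filter.2 ⟨hg, hgp⟩))
        have : q ∈ (insert p N).filter fun q => R m q := by
          rw [heq]
          exact Finset.mem_filter.2 ⟨hq, hgq⟩
        exact (Finset.mem_filter.1 this).2
    have hCB : ((insert g₀ A).filter fun g => R g p → g = m) ⊆ insert g₀ A :=
      Finset.filter_subset _ _
    have hmC : m ∈ (insert g₀ A).filter fun g => R g p → g = m :=
      Finset.mem_filter.2 ⟨hmB, fun _ => rfl⟩
    refine ⟨(insert g₀ A).filter fun g => R g p → g = m, hCB.trans hBG, ?_, ?_⟩
    · intro q hq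
      have hcovB : ∃ g ∈ insert g₀ A, R g q := by
        rcases Finset.mem_insert.1 hq with rfl | hqN
        · exact ⟨g₀, Finset.mem_insert_self _ _, hg₀p⟩
        · obtain ⟨g, hg, hgq⟩ := hAcov q hqN
          exact ⟨g, Finset.mem_insert_of_mem hg, hgq⟩
      obtain ⟨g, hg, hgq⟩ := hcovB
      by_cases hgp : R g p
      · exact ⟨m, hmC, hmdom g hg hgp q hq hgq⟩
      · exact ⟨g, Finset.mem_filter.2 ⟨hg, fun h => absurd h hgp⟩, hgq⟩
    · have hC : ∑ g ∈ (insert g₀ A).filter (fun g => R g p → g = m), w' g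
          ≤ ∑ g ∈ insert g₀ A, w' g :=
        Finset.sum_le_sum_of_subset_of_nonneg hCB fun g hg _ => hw'0 g (hBG hg)
      have hone : ∑ g ∈ (insert g₀ A).filter (fun g => R g p → g = m),
          (if R g p then w g₀ else 0) = w g₀ := by
        rw [Finset.sum_eq_single_of_mem m hmC, if_pos hmp]
        intro g hg hgm
        exact if_neg fun h => hgm ((Finset.mem_filter.1 hg).2 h)
      have hsplit : ∑ g ∈ (insert g₀ A).filter (fun g => R g p → g = m), w' g
          = ∑ g ∈ (insert g₀ A).filter (fun g => R g p → g = m), w g - w g₀ := by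
        rw [← hone, ← Finset.sum_sub_distrib]
        refine Finset.sum_congr rfl fun g _ => ?_
        exact hw' g
      have hlp : ∑ g ∈ G, w' g * x g
          = ∑ g ∈ G, w g * x g - w g₀ * ∑ g ∈ G, (if R g p then x g else 0) := by
        rw [Finset.mul_sum, ← Finset.sum_sub_distrib]
        refine Finset.sum_congr rfl fun g _ => ?_
        rw [hw']
        split_ifs <;> ring
      have := mul_le_mul_of_nonneg_left hp (hw g₀ hg₀G)
      linarith

theorem seesLeft_nested (f : ℝ → ℝ) (p g g' : ℝ) (hg : SeesLeft f g p) (hg' : SeesLeft f g' p) :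
    (∀ q, p ≤ q → SeesLeft f g q → SeesLeft f g' q) ∨
      (∀ q, p ≤ q → SeesLeft f g' q → SeesLeft f g q) := by
  have key : ∀ a b, a < b → SeesLeft f a p → SeesLeft f b p →
      ∀ q, p ≤ q → SeesLeft f b q → SeesLeft f a q := by
    intro a b hab ha hb q hpq hbq
    rcases hpq.eq_or_lt with rfl | hpq
    · exact ha
    · exact ⟨hab.trans hbq.1, Sees.order_claim hab hb.1 hpq ha.2 hbq.2⟩
  rcases lt_trichotomy g g' with h | rfl | h
  · exact Or.inr (key g g' h hg hg')
  · exact Or.inl fun _ _ h => h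
  · exact Or.inl (key g' g h hg' hg)

theorem seesRight_nested (f : ℝ → ℝ) (p g g' : ℝ) (hg : SeesRight f g p)
    (hg' : SeesRight f g' p) :
    (∀ q, q ≤ p → SeesRight f g q → SeesRight f g' q) ∨
      (∀ q, q ≤ p → SeesRight f g' q → SeesRight f g q) := by
  have key : ∀ a b, b < a → SeesRight f a p → SeesRight f b p →
      ∀ q, q ≤ p → SeesRight f b q → SeesRight f a q := by
    intro a b hba ha hb q hqp hbq
    rcases hqp.eq_or_lt with rfl | hqp
    · exact ha
    · exact ⟨hbq.1.trans hba, (Sees.order_claim hqp hb.1 hba hbq.2.symm ha.2.symm).symm⟩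
  rcases lt_trichotomy g g' with h | rfl | h
  · exact Or.inl (key g' g h hg' hg)
  · exact Or.inl fun _ _ h => h
  · exact Or.inr (key g g' h hg hg')

/-- LP-rounding gives a factor-2 guarantee for one-sided guarding. -/
theorem one_sided_guarding_two_approx (f : ℝ → ℝ) (G_L G_R N : Finset ℝ)
    (w_L w_R x y : ℝ → ℝ)
    (hwL : ∀ g ∈ G_L, 0 ≤ w_L g) (hwR : ∀ g ∈ G_R, 0 ≤ w_R g)
    (hx : ∀ g ∈ G_L, 0 ≤ x g) (hy : ∀ g ∈ G_R, 0 ≤ y g)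
    (hcov : ∀ p ∈ N,
      1 ≤ (∑ g ∈ G_L, if SeesLeft f g p then x g else 0) +
          (∑ g ∈ G_R, if SeesRight f g p then y g else 0)) :
    ∃ A_L ⊆ G_L, ∃ A_R ⊆ G_R,
      (∀ p ∈ N, (∃ g ∈ A_L, SeesLeft f g p) ∨ (∃ g ∈ A_R, SeesRight f g p)) ∧
      (∑ g ∈ A_L, w_L g) + (∑ g ∈ A_R, w_R g) ≤
        2 * ((∑ g ∈ G_L, w_L g * x g) + (∑ g ∈ G_R, w_R g * y g)) := by
  have hdbl : ∀ (G : Finset ℝ) (P : ℝ → Prop) (z : ℝ → ℝ),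
      1 / 2 ≤ (∑ g ∈ G, if P g then z g else 0) →
      1 ≤ ∑ g ∈ G, if P g then 2 * z g else 0 := by
    intro G P z h
    have : (∑ g ∈ G, if P g then 2 * z g else 0) = 2 * ∑ g ∈ G, if P g then z g else 0 := by
      rw [Finset.mul_sum]
      exact Finset.sum_congr rfl fun g _ => by split_ifs <;> simp
    linarith
  obtain ⟨A, hA, hAcov, hAw⟩ := exists_cover_of_nested (SeesLeft f) (seesLeft_nested f) G_L
    (fun g => 2 * x g) (fun g hg => by linarith [hx g hg])
    (N.filter fun p => 1 / 2 ≤ ∑ g ∈ G_L, if SeesLeft f g p then x g else 0) w_L hwL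
    (fun p hp => hdbl _ _ _ (Finset.mem_filter.1 hp).2)
  -- Right guards are handled by reversing the order of the points.
  obtain ⟨B, hB, hBcov, hBw⟩ := exists_cover_of_nested (α := ℝᵒᵈ) (SeesRight f)
    (seesRight_nested f) G_R
    (fun g => 2 * y g) (fun g hg => by linarith [hy g hg])
    (N.filter fun p => 1 / 2 ≤ ∑ g ∈ G_R, if SeesRight f g p then y g else 0) w_R hwR
    (fun p hp => hdbl _ _ _ (Finset.mem_filter.1 hp).2)
  refine ⟨A, hA, B, hB, ?_, ?_⟩
  · intro p hp
    rcases le_or_gt (1 / 2) (∑ g ∈ G_L, if SeesLeft f g p then x g else 0) with h | h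
    · exact Or.inl (hAcov p (Finset.mem_filter.2 ⟨hp, h⟩))
    · exact Or.inr (hBcov p (Finset.mem_filter.2 ⟨hp, by linarith [hcov p hp]⟩))
  · rw [mul_add, Finset.mul_sum, Finset.mul_sum]
    simp only [mul_left_comm _ (2 : ℝ)] at hAw hBw
    exact add_le_add hAw hBw
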